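/- arXiv:1312.2724 — 3 statements merged into one kernel-verified Lean document; each statement's English description precedes it below -/
import Mathlib

section
/- Let B be a real 2×2 matrix with Bᵀ = B, trace B = 0, and det B > −1, and let J = !![0, −1; 1, 0]. Then: (i) (1 + J·B)·(1 − J·B) = (1 − J·B)·(1 + J·B) = (1 + det B)·1; (ii) the matrices 1 + J·B and 1 − J·B are invertible; (iii) the matrix b := (1 + J·B)⁻¹·(1 − J·B) is symmetric and positive definite; (iv) det b = 1. -/
/-!
Write `S = J * B` and `d = 1 + det B > 0`. Since `B` is symmetric and traceless, `S` is again
symmetric and traceless, with `det S = det B`. Hence `S * S = -det B • 1` (Cayley–Hamilton), which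
gives `(1 + S) * (1 - S) = d • 1`, and `det (1 ± S) = d`. Therefore
`(1 + S)⁻¹ = d⁻¹ • (1 - S)`, and `b = (1 + S)⁻¹ * (1 - S) = d⁻¹ • (1 - S)ᵀ * (1 - S)` is a positive
multiple of a Gram matrix of an invertible matrix. Its determinant is the quotient
`det (1 - S) / det (1 + S) = 1`.
-/

open Matrix

theorem mess_morphism_posdef (B J : Matrix (Fin 2) (Fin 2) ℝ)
    (hJ : J = !![0, -1; 1, 0])
    (hsym : Bᵀ = B) (htr : B.trace = 0) (hdet : -1 < B.det) :
    ((1 + J * B) * (1 - J * B) = (1 + B.det) • (1 : Matrix (Fin 2) (Fin 2) ℝ) ∧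
      (1 - J * B) * (1 + J * B) = (1 + B.det) • (1 : Matrix (Fin 2) (Fin 2) ℝ)) ∧
    (IsUnit (1 + J * B) ∧ IsUnit (1 - J * B)) ∧
    (((1 + J * B)⁻¹ * (1 - J * B))ᵀ = (1 + J * B)⁻¹ * (1 - J * B) ∧
      ((1 + J * B)⁻¹ * (1 - J * B)).PosDef) ∧
    ((1 + J * B)⁻¹ * (1 - J * B)).det = 1 := by
  have h10 : B 1 0 = B 0 1 := congrFun (congrFun hsym 0) 1
  have h11 : B 1 1 = -B 0 0 := by
    rw [trace_fin_two] at htr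
    linarith
  have hS : J * B = !![-B 0 1, B 0 0; B 0 0, B 0 1] := by
    ext i j
    fin_cases i <;> fin_cases j <;> simp [hJ, mul_apply, Fin.sum_univ_two, h10, h11]
  have hd : B.det = -(B 0 0 ^ 2 + B 0 1 ^ 2) := by
    rw [det_fin_two, h10, h11]
    ring
  have hST : (J * B)ᵀ = J * B := by
    rw [hS]
    ext i j
    fin_cases i <;> fin_cases j <;> rfl
  have hSS : (J * B) * (J * B) = (-B.det) • (1 : Matrix (Fin 2) (Fin 2) ℝ) := by
    rw [hS, hd]
    ext i j
    fin_cases i <;> fin_cases j <;> simp [mul_apply, Fin.sum_univ_two] <;> ring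
  have hdp : (1 + J * B).det = 1 + B.det := by
    rw [hS, hd, det_fin_two]
    simp
    ring
  have hdm : (1 - J * B).det = 1 + B.det := by
    rw [hS, hd, det_fin_two]
    simp
    ring
  generalize J * B = S at *
  have hpos : 0 < 1 + B.det := by linarith
  generalize B.det = δ at *
  have hpm : (1 + S) * (1 - S) = (1 + δ) • (1 : Matrix (Fin 2) (Fin 2) ℝ) := by
    rw [add_mul, mul_sub, mul_sub, hSS, add_smul, neg_smul, one_smul, one_mul, one_mul, mul_one]
    abel
  have hmp : (1 - S) * (1 + S) = (1 + δ) • (1 : Matrix (Fin 2) (Fin 2) ℝ) := by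
    rw [sub_mul, mul_add, mul_add, hSS, add_smul, neg_smul, one_smul, one_mul, one_mul, mul_one]
    abel
  have hup : IsUnit (1 + S) := by
    rw [isUnit_iff_isUnit_det, hdp]
    exact hpos.ne'.isUnit
  have hum : IsUnit (1 - S) := by
    rw [isUnit_iff_isUnit_det, hdm]
    exact hpos.ne'.isUnit
  have hinv : (1 + S)⁻¹ = (1 + δ)⁻¹ • (1 - S) := by
    apply inv_eq_right_inv
    rw [mul_smul_comm, hpm, smul_smul, inv_mul_cancel₀ hpos.ne', one_smul]
  have hb : (1 + S)⁻¹ * (1 - S) = (1 + δ)⁻¹ • ((1 - S)ᴴ * (1 - S)) := by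
    rw [hinv, smul_mul_assoc, conjTranspose_eq_transpose_of_trivial, transpose_sub,
      transpose_one, hST]
  have hpd : ((1 + S)⁻¹ * (1 - S)).PosDef := by
    rw [hb]
    exact (PosDef.conjTranspose_mul_self _ (mulVec_injective_of_isUnit hum)).smul (inv_pos.2 hpos)
  refine ⟨⟨hpm, hmp⟩, ⟨hup, hum⟩, ⟨?_, hpd⟩, ?_⟩
  · simpa only [conjTranspose_eq_transpose_of_trivial] using hpd.isHermitian.eq
  · rw [det_mul, det_nonsing_inv, hdp, hdm, Ring.inverse_eq_inv', inv_mul_cancel₀ hpos.ne']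
end

section
/- Let b be a real 2×2 matrix with bᵀ = b, b positive definite, and det b = 1. Set J := !![0, −1; 1, 0], A := (1/2)·(1 + b), S := (1 + b)⁻¹·(1 − b), J' := A⁻¹·J·A, and B' := −J'·S. Then: (i) 1 + b and 1 + S are invertible, and (1 + S)⁻¹·(1 − S) = b; (ii) A·(1 + S) = 1 and A·(1 − S) = b, so that ⟪A(1+S)x, A(1+S)y⟫ = ⟪x,y⟫ and ⟪A(1−S)x, A(1−S)y⟫ = ⟪b x, b y⟫ for all x, y ∈ ℝ²; (iii) J'·J' = −1 and ⟪A J' x, A J' y⟫ = ⟪A x, A y⟫ for all x, y; (iv) J'·B' = S; (v) trace B' = 0, det B' ∈ (−1, 0], and ⟪A B' x, A y⟫ = ⟪A x, A B' y⟫ for all x, y. -/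
open Matrix

/-!
Everything follows from the three relations `A * (1 + S) = 1`, `A * S = (1/2) • (1 - b)` and
`A * J' = J * A`, together with the fact that `A` is invertible because
`det (1 + b) = 2 + tr b > 0`. They give `A * B' = -J * ((1/2) • (1 - b))`, so `Aᵀ * A * B'` is
a multiple of `(1 + b) * J * (1 - b) = b * J - J * b` (as `b * J * b = (det b) • J = J`),
which is symmetric: this is the self-adjointness of `B'`.
The trace of `B'` is a multiple of that of `adj (1 + b) * J * (1 - b)`, which vanishes because
`b` is symmetric. Finally `det B' = det S = det (1 - b) / det (1 + b) = (2 - t) / (2 + t)` with `t = tr b`, and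
`t ≥ 2` since `b` has determinant one, by the AM-GM inequality.
-/

/-- A positive definite symmetric `2 × 2` matrix of determinant one, in coordinates; the bound
`2 ≤ p + r` is AM-GM applied to `p * r = 1 + q ^ 2`. -/
lemma exists_coords (b : Matrix (Fin 2) (Fin 2) ℝ) (hsym : bᵀ = b) (hpos : b.PosDef)
    (hdet : b.det = 1) :
    ∃ p q r : ℝ, b = !![p, q; q, r] ∧ p * r - q * q = 1 ∧ 2 ≤ p + r := by
  have h01 : b 1 0 = b 0 1 := congrFun (congrFun hsym 0) 1
  have h0 : 0 < b 0 0 := hpos.diag_pos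
  have h1 : 0 < b 1 1 := hpos.diag_pos
  rw [det_fin_two, h01] at hdet
  refine ⟨b 0 0, b 0 1, b 1 1, ?_, hdet, ?_⟩
  · ext i j
    fin_cases i <;> fin_cases j <;> simp [h01]
  · nlinarith [sq_nonneg (b 0 0 - b 1 1), sq_nonneg (b 0 1)]

/-- A matrix identity `Mᵀ * N = Pᵀ * Q` read as an identity of bilinear forms. -/
lemma mulVec_dotProduct_mulVec_congr {M N P Q : Matrix (Fin 2) (Fin 2) ℝ}
    (h : Mᵀ * N = Pᵀ * Q) (x y : Fin 2 → ℝ) :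
    (M *ᵥ x) ⬝ᵥ (N *ᵥ y) = (P *ᵥ x) ⬝ᵥ (Q *ᵥ y) := by
  have key : ∀ K L : Matrix (Fin 2) (Fin 2) ℝ,
      (K *ᵥ x) ⬝ᵥ (L *ᵥ y) = x ⬝ᵥ ((Kᵀ * L) *ᵥ y) := fun K L => by
    rw [← mulVec_mulVec, dotProduct_mulVec x, vecMul_transpose]
  rw [key, key, h]

theorem uniqueness_reconstruction (b J A S J' B' : Matrix (Fin 2) (Fin 2) ℝ)
    (hsym : bᵀ = b) (hpos : b.PosDef) (hdet : b.det = 1)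
    (hJ : J = !![0, -1; 1, 0])
    (hA : A = (1 / 2 : ℝ) • (1 + b))
    (hS : S = (1 + b)⁻¹ * (1 - b))
    (hJ' : J' = A⁻¹ * J * A)
    (hB' : B' = -(J' * S)) :
    -- (i)
    (IsUnit (1 + b) ∧ IsUnit (1 + S) ∧ (1 + S)⁻¹ * (1 - S) = b) ∧
    -- (ii)
    (A * (1 + S) = 1 ∧ A * (1 - S) = b ∧
      (∀ x y : Fin 2 → ℝ,
        ((A * (1 + S)) *ᵥ x) ⬝ᵥ ((A * (1 + S)) *ᵥ y) = x ⬝ᵥ y) ∧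
      (∀ x y : Fin 2 → ℝ,
        ((A * (1 - S)) *ᵥ x) ⬝ᵥ ((A * (1 - S)) *ᵥ y) = (b *ᵥ x) ⬝ᵥ (b *ᵥ y))) ∧
    -- (iii)
    (J' * J' = -1 ∧
      (∀ x y : Fin 2 → ℝ,
        (A *ᵥ (J' *ᵥ x)) ⬝ᵥ (A *ᵥ (J' *ᵥ y)) = (A *ᵥ x) ⬝ᵥ (A *ᵥ y))) ∧
    -- (iv)
    (J' * B' = S) ∧
    -- (v)
    (B'.trace = 0 ∧ B'.det ∈ Set.Ioc (-1 : ℝ) 0 ∧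
      (∀ x y : Fin 2 → ℝ,
        (A *ᵥ (B' *ᵥ x)) ⬝ᵥ (A *ᵥ y) = (A *ᵥ x) ⬝ᵥ (A *ᵥ (B' *ᵥ y)))) := by
  obtain ⟨p, q, r, hb, hpqr, ht⟩ := exists_coords b hsym hpos hdet
  have hd : (1 + b).det = 2 + (p + r) := by
    rw [hb, det_fin_two]; simp; linarith
  have hd' : (1 - b).det = 2 - (p + r) := by
    rw [hb, det_fin_two]; simp; linarith
  have hdu : IsUnit (1 + b).det := by
    rw [hd]; exact (by linarith : (2 + (p + r)) ≠ 0).isUnit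
  have hmulS : (1 + b) * S = 1 - b := by
    rw [hS, mul_nonsing_inv_cancel_left _ _ hdu]
  have hAS : A * S = (1 / 2 : ℝ) • (1 - b) := by
    rw [hA, smul_mul_assoc, hmulS]
  have hA1 : A * (1 + S) = 1 := by
    rw [mul_add, hAS, hA, mul_one]; module
  have hA2 : A * (1 - S) = b := by
    rw [mul_sub, hAS, hA, mul_one]; module
  have hAu : IsUnit A.det := isUnit_det_of_right_inverse hA1
  have hSA : (1 + S) * A = 1 := mul_eq_one_comm.mp hA1
  have hinvS : (1 + S)⁻¹ = A := inv_eq_right_inv hSA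
  have hAT : Aᵀ = A := by rw [hA]; simp [hsym]
  have hAJ : A * J' = J * A := by
    rw [hJ', mul_assoc, mul_nonsing_inv_cancel_left _ _ hAu]
  have hJJ : J * J = -1 := by
    rw [hJ]; ext i j; fin_cases i <;> fin_cases j <;> simp
  have hJT : Jᵀ = -J := by
    rw [hJ]; ext i j; fin_cases i <;> fin_cases j <;> simp
  have hJdet : J.det = 1 := by rw [hJ]; simp
  have hJJ' : J' * J' = -1 := by
    have h : A * (J' * J') = A * (-1) := by
      rw [← mul_assoc, hAJ, mul_assoc, hAJ, ← mul_assoc, hJJ]; simp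
    have h2 := congrArg (fun X => A⁻¹ * X) h
    simpa only [nonsing_inv_mul_cancel_left _ _ hAu] using h2
  have hJ'det : J'.det = 1 := by
    have h := congrArg det hAJ
    rw [det_mul, det_mul, hJdet, one_mul] at h
    exact mul_left_cancel₀ hAu.ne_zero (h.trans (mul_one _).symm)
  have hAB : A * B' = -(J * ((1 / 2 : ℝ) • (1 - b))) := by
    rw [hB', mul_neg, ← mul_assoc, hAJ, mul_assoc, hAS]
  have hAB' : A * B' = !![-q / 2, (1 - r) / 2; (p - 1) / 2, q / 2] := by
    have h1b : 1 - b = !![1 - p, -q; -q, 1 - r] := by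
      rw [hb]; ext i j; fin_cases i <;> fin_cases j <;> simp
    rw [hAB, h1b, hJ]
    ext i j
    fin_cases i <;> fin_cases j <;> simp <;> ring
  have hSdet : (2 + (p + r)) * S.det = 2 - (p + r) := by
    rw [← hd, ← hd', ← det_mul, hmulS]
  have hB'det : B'.det = S.det := by
    rw [hB', det_neg, det_mul, hJ'det]; simp
  have htpos : 0 < 2 + (p + r) := by linarith
  refine ⟨⟨(isUnit_iff_isUnit_det _).mpr hdu, IsUnit.of_mul_eq_one _ hSA, ?_⟩,
    ⟨hA1, hA2, ?_, ?_⟩, ⟨hJJ', ?_⟩, ?_, ?_, ⟨?_, ?_⟩, ?_⟩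
  · rw [hinvS, hA2]
  · intro x y; rw [hA1, one_mulVec, one_mulVec]
  · intro x y; rw [hA2]
  · intro x y
    rw [mulVec_mulVec, mulVec_mulVec]
    apply mulVec_dotProduct_mulVec_congr
    rw [hAJ, transpose_mul, hJT, mul_assoc, ← mul_assoc (-J), neg_mul, hJJ, neg_neg, one_mul]
  · rw [hB', mul_neg, ← mul_assoc, hJJ']; simp
  -- Since `A⁻¹ = (2 / det (1 + b)) • adj (1 + b)`, only a polynomial trace is left to compute.
  · have hB : B' = (2 * (2 + (p + r))⁻¹) •
        ((1 + b).adjugate * !![-q / 2, (1 - r) / 2; (p - 1) / 2, q / 2]) := by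
      have hinv : A⁻¹ = (2 * (2 + (p + r))⁻¹) • (1 + b).adjugate := by
        apply inv_eq_right_inv
        rw [hA, smul_mul_smul_comm, mul_adjugate, hd, smul_smul]
        have : 1 / 2 * (2 * (2 + (p + r))⁻¹) * (2 + (p + r)) = 1 := by field_simp
        rw [this, one_smul]
      rw [← hAB', ← smul_mul_assoc, ← hinv, nonsing_inv_mul_cancel_left _ _ hAu]
    rw [hB, trace_smul, hb, trace_fin_two, adjugate_fin_two]
    simp [mul_apply, Fin.sum_univ_two]
    right; ring
  · rw [hB'det]; nlinarith
  · rw [hB'det]; nlinarith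
  · intro x y
    rw [mulVec_mulVec, mulVec_mulVec]
    apply mulVec_dotProduct_mulVec_congr
    rw [hAB', hAT, hA, hb]
    ext i j
    fin_cases i <;> fin_cases j <;>
      simp [mul_apply, Fin.sum_univ_two] <;> linarith
end

section
/- Let k ∈ [0,1), let B be a real 2×2 matrix with Bᵀ = B, trace B = 0 and det B = −k², and let J = !![0, −1; 1, 0]. Then 1 + J·B is invertible and the matrix b := (1 + J·B)⁻¹·(1 − J·B) has eigenvalues exactly (1−k)/(1+k) and (1+k)/(1−k); in particular every eigenvalue of b is strictly positive, trace b = 2(1+k²)/(1−k²), and det b = 1. -/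
/-!
Write `M = J * B`. Since `B` is symmetric and traceless, `M` is again symmetric and traceless, and
`M * M = k ^ 2 • 1`. Hence `(1 + M)⁻¹ = (1 - k ^ 2)⁻¹ • (1 - M)` and
`b = (1 - k ^ 2)⁻¹ • ((1 + k ^ 2) • 1 - 2 • M)`, from which the trace and determinant are read off.
The spectrum is the root set of `μ ^ 2 - (trace b) * μ + 1`, which factors as
`(μ - (1 - k) / (1 + k)) * (μ - (1 + k) / (1 - k))`.
-/

open Matrix

/-- The spectrum of a real `2 × 2` matrix consists of the real roots of `X² - (tr A) X + det A`. -/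
lemma mem_spectrum_fin_two_iff (A : Matrix (Fin 2) (Fin 2) ℝ) (μ : ℝ) :
    μ ∈ spectrum ℝ A ↔ μ ^ 2 - A.trace * μ + A.det = 0 := by
  rw [spectrum.mem_iff, Matrix.isUnit_iff_isUnit_det, isUnit_iff_ne_zero, not_not]
  have h : (algebraMap ℝ (Matrix (Fin 2) (Fin 2) ℝ) μ - A).det
      = μ ^ 2 - A.trace * μ + A.det := by
    simp [Matrix.det_fin_two, Matrix.trace_fin_two, Matrix.algebraMap_matrix_apply]
    ring
  rw [h]

theorem mess_morphism_eigenvalues (k : ℝ) (hk : k ∈ Set.Ico (0 : ℝ) 1)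
    (B J : Matrix (Fin 2) (Fin 2) ℝ) (hJ : J = !![0, -1; 1, 0])
    (hsym : Bᵀ = B) (htr : B.trace = 0) (hdet : B.det = -k ^ 2) :
    IsUnit (1 + J * B) ∧
    spectrum ℝ ((1 + J * B)⁻¹ * (1 - J * B)) = {(1 - k) / (1 + k), (1 + k) / (1 - k)} ∧
    (∀ μ ∈ spectrum ℝ ((1 + J * B)⁻¹ * (1 - J * B)), 0 < μ) ∧
    ((1 + J * B)⁻¹ * (1 - J * B)).trace = 2 * (1 + k ^ 2) / (1 - k ^ 2) ∧
    ((1 + J * B)⁻¹ * (1 - J * B)).det = 1 := by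
  obtain ⟨hk0, hk1⟩ := hk
  have hp : 0 < 1 + k := by linarith
  have hm : 0 < 1 - k := by linarith
  have hne : 1 - k ^ 2 ≠ 0 := by nlinarith
  have h10 : B 1 0 = B 0 1 := by
    simpa using congrFun (congrFun hsym 0) 1
  have h11 : B 1 1 = -B 0 0 := by
    rw [Matrix.trace_fin_two] at htr
    linarith
  have hsq : B 0 0 ^ 2 + B 0 1 ^ 2 = k ^ 2 := by
    rw [Matrix.det_fin_two, h10, h11] at hdet
    linarith
  have hM : J * B = !![-B 0 1, B 0 0; B 0 0, B 0 1] := by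
    ext i j
    fin_cases i <;> fin_cases j <;> simp [hJ, Matrix.mul_apply, Fin.sum_univ_two, h10, h11]
  have hMtr : (J * B).trace = 0 := by
    simp [hM, Matrix.trace_fin_two]
  have hMM : (J * B) * (J * B) = (k ^ 2) • (1 : Matrix (Fin 2) (Fin 2) ℝ) := by
    rw [hM, ← hsq]
    ext i j
    fin_cases i <;> fin_cases j <;> simp [Matrix.mul_apply, Fin.sum_univ_two] <;> ring
  have hdp : (1 + J * B).det = 1 - k ^ 2 := by
    rw [hM, ← hsq]
    simp [Matrix.det_fin_two]
    ring
  have hdm : (1 - J * B).det = 1 - k ^ 2 := by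
    rw [hM, ← hsq]
    simp [Matrix.det_fin_two]
    ring
  have hinv : (1 + J * B)⁻¹ = (1 - k ^ 2)⁻¹ • (1 - J * B) := by
    apply Matrix.inv_eq_right_inv
    have h : (1 + J * B) * (1 - J * B) = (1 - k ^ 2) • (1 : Matrix (Fin 2) (Fin 2) ℝ) := by
      rw [sub_smul, one_smul, ← hMM]
      noncomm_ring
    rw [Matrix.mul_smul, h, smul_smul, inv_mul_cancel₀ hne, one_smul]
  have hT : ((1 + J * B)⁻¹ * (1 - J * B)).trace = 2 * (1 + k ^ 2) / (1 - k ^ 2) := by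
    have h : (1 - J * B) * (1 - J * B)
        = (1 + k ^ 2) • (1 : Matrix (Fin 2) (Fin 2) ℝ) - (2 : ℝ) • (J * B) := by
      rw [add_smul, one_smul, ← hMM, two_smul]
      noncomm_ring
    rw [hinv, Matrix.smul_mul, h, Matrix.trace_smul, Matrix.trace_sub, Matrix.trace_smul,
      Matrix.trace_smul, hMtr, Matrix.trace_one]
    simp
    field_simp
  have hD : ((1 + J * B)⁻¹ * (1 - J * B)).det = 1 := by
    rw [Matrix.det_mul, Matrix.det_nonsing_inv, hdp, hdm, Ring.inverse_eq_inv',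
      inv_mul_cancel₀ hne]
  have hS : spectrum ℝ ((1 + J * B)⁻¹ * (1 - J * B))
      = {(1 - k) / (1 + k), (1 + k) / (1 - k)} := by
    ext μ
    rw [mem_spectrum_fin_two_iff, hT, hD, Set.mem_insert_iff, Set.mem_singleton_iff,
      ← sub_eq_zero (a := μ), ← sub_eq_zero (a := μ) (b := (1 + k) / (1 - k)), ← mul_eq_zero]
    have h : μ ^ 2 - 2 * (1 + k ^ 2) / (1 - k ^ 2) * μ + 1
        = (μ - (1 - k) / (1 + k)) * (μ - (1 + k) / (1 - k)) := by
      have hf : 1 - k ^ 2 = (1 + k) * (1 - k) := by ring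
      rw [hf]
      field_simp
      ring
    rw [h]
  refine ⟨?_, hS, ?_, hT, hD⟩
  · rw [Matrix.isUnit_iff_isUnit_det, hdp]
    exact hne.isUnit
  · intro μ hμ
    rw [hS] at hμ
    rcases hμ with rfl | rfl <;> positivity
end
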